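/- arXiv:math/0609644 — 2 statements merged into one kernel-verified Lean document; each statement's English description precedes it below -/
import Mathlib

section
/- For every n ≥ 2, |S_{Y_n}(321)| = c_n − 1. -/
/-!
A transversal of `Y_n` is a permutation whose last entry is not the smallest value. The missing
corner lies in the last column and the bottom row, so a copy of `321` fails to fit into `Y_n` only
if its smallest entry sits in the corner itself, which a transversal excludes. Hence `S_{Y_n}(321)`
consists of the classical `321`-avoiders whose last entry is not minimal
(`transversal_avoids_iff`). A `321`-avoider ending in its minimum is increasing before that entry,
so exactly one avoider is excluded (`unique_last_zero`).

It remains to count `321`-avoiders by Catalan numbers. Let `N n k` be the number of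
`321`-avoiders of length `n` in which the values `0, …, k - 1` occur in increasing order
(`IsGood`). Deleting the first entry `c` leaves an arbitrary avoider in which the values below `c`
are in increasing order, and keeping track of `k` gives (`card_good_succ`)
`N (n+1) k = N n (k-1) + ∑_{c ≥ max k 1} N n c`.
The ballot numbers `binom (2n-k) n - binom (2n-k) (n+1)` satisfy the same recursion
(`card_good`), and at `k = 0` they are the Catalan numbers.
-/

open Equiv

/-- `π` is a transversal of the Young diagram with row lengths `b` (zero-indexed:
the row at height `h` has `b h` cells, i.e. column `i` (1-indexed `i+1`) lies in that row
iff `(i:ℕ)+1 ≤ b h`). -/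
def IsTransversal {n : ℕ} (b : Fin n → ℕ) (π : Equiv.Perm (Fin n)) : Prop :=
  ∀ i : Fin n, (i : ℕ) + 1 ≤ b (π i)

/-- The transversal `π` contains the pattern `τ` inside the Young diagram `b`:
there are columns `f 0 < f 1 < …` whose dots are in the relative order prescribed by `τ`
and all rows and columns through these dots intersect inside the diagram. -/
def ContainsIn {n k : ℕ} (b : Fin n → ℕ) (π : Equiv.Perm (Fin n))
    (τ : Equiv.Perm (Fin k)) : Prop :=
  ∃ f : Fin k → Fin n, StrictMono f ∧
    (∀ s t : Fin k, τ s < τ t ↔ π (f s) < π (f t)) ∧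
    (∀ s t : Fin k, (f s : ℕ) + 1 ≤ b (π (f t)))

/-- `|S_Y(τ)|`: the number of transversals of the Young diagram `b` avoiding `τ` in `Y`. -/
noncomputable def SYcard {n k : ℕ} (b : Fin n → ℕ) (τ : Equiv.Perm (Fin k)) : ℕ :=
  Nat.card {π : Equiv.Perm (Fin n) // IsTransversal b π ∧ ¬ ContainsIn b π τ}

/-- Classical pattern containment for permutations. -/
def ContainsPat {n k : ℕ} (π : Equiv.Perm (Fin n)) (τ : Equiv.Perm (Fin k)) : Prop :=
  ∃ f : Fin k → Fin n, StrictMono f ∧ ∀ s t : Fin k, τ s < τ t ↔ π (f s) < π (f t)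

/-- `|S_n(τ)|`: the number of permutations of length `n` avoiding `τ`. -/
noncomputable def SnCard (n : ℕ) {k : ℕ} (τ : Equiv.Perm (Fin k)) : ℕ :=
  Nat.card {π : Equiv.Perm (Fin n) // ¬ ContainsPat π τ}

def p123 : Equiv.Perm (Fin 3) := Equiv.refl _
def p213 : Equiv.Perm (Fin 3) :=
  ⟨![1, 0, 2], ![1, 0, 2], by intro x; fin_cases x <;> rfl, by intro x; fin_cases x <;> rfl⟩
def p312 : Equiv.Perm (Fin 3) :=
  ⟨![2, 0, 1], ![1, 2, 0], by intro x; fin_cases x <;> rfl, by intro x; fin_cases x <;> rfl⟩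
def p321 : Equiv.Perm (Fin 3) :=
  ⟨![2, 1, 0], ![2, 1, 0], by intro x; fin_cases x <;> rfl, by intro x; fin_cases x <;> rfl⟩

/-- `(σ|τ)`: the block sum with the block of `σ` before and entirely above the block of `τ`. -/
def blockSum {m k : ℕ} (σ : Equiv.Perm (Fin m)) (τ : Equiv.Perm (Fin k)) :
    Equiv.Perm (Fin (m + k)) :=
  finSumFinEquiv.symm.trans ((((Equiv.sumCongr σ τ).trans
    (Equiv.sumComm (Fin m) (Fin k))).trans finSumFinEquiv).trans
    (finCongr (Nat.add_comm k m)))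

/-- `|S_{↘Y}(τ)|`: avoiders whose two leftmost entries are decreasing. -/
noncomputable def SYcardLeftDesc {m k : ℕ} (b : Fin m → ℕ) (τ : Equiv.Perm (Fin k)) : ℕ :=
  Nat.card {π : Equiv.Perm (Fin m) // IsTransversal b π ∧ ¬ ContainsIn b π τ ∧
    ∀ i j : Fin m, (i : ℕ) = 0 → (j : ℕ) = 1 → π j < π i}

/-- `|S_{↗Y}(τ)|`: avoiders whose two leftmost entries are increasing. -/
noncomputable def SYcardLeftAsc {m k : ℕ} (b : Fin m → ℕ) (τ : Equiv.Perm (Fin k)) : ℕ :=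
  Nat.card {π : Equiv.Perm (Fin m) // IsTransversal b π ∧ ¬ ContainsIn b π τ ∧
    ∀ i j : Fin m, (i : ℕ) = 0 → (j : ℕ) = 1 → π i < π j}

/-- `|S^{↘}_Y(τ)|`: avoiders in which the value `m` occurs to the left of the value `m-1`. -/
noncomputable def SYcardTopDesc {m k : ℕ} (b : Fin m → ℕ) (τ : Equiv.Perm (Fin k)) : ℕ :=
  Nat.card {π : Equiv.Perm (Fin m) // IsTransversal b π ∧ ¬ ContainsIn b π τ ∧
    ∀ u v : Fin m, (u : ℕ) + 1 = m → (v : ℕ) + 2 = m → π⁻¹ u < π⁻¹ v}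

/-- `|S^{↗}_Y(τ)|`: avoiders in which the value `m-1` occurs to the left of the value `m`. -/
noncomputable def SYcardTopAsc {m k : ℕ} (b : Fin m → ℕ) (τ : Equiv.Perm (Fin k)) : ℕ :=
  Nat.card {π : Equiv.Perm (Fin m) // IsTransversal b π ∧ ¬ ContainsIn b π τ ∧
    ∀ u v : Fin m, (u : ℕ) + 1 = m → (v : ℕ) + 2 = m → π⁻¹ v < π⁻¹ u}

/-- The Young diagram `Y_n`: the square `M_n` minus its bottom-right cell. -/
def bYn (n : ℕ) : Fin n → ℕ := fun y => if (y : ℕ) = 0 then n - 1 else n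


/-! ### Avoiders refined by the initial run of sorted values -/

/-- `π` avoids `321`, and no inversion of `π` has its larger value below `k`; that is, the values
`0, …, k - 1` occur in `π` from left to right in increasing order. -/
def IsGood {n : ℕ} (k : ℕ) (π : Perm (Fin n)) : Prop :=
  (∀ i j l : Fin n, i < j → j < l → ¬ (π l < π j ∧ π j < π i)) ∧
    ∀ i j : Fin n, i < j → ¬ (π j < π i ∧ (π i : ℕ) < k)

/-- The permutation with first entry `c` whose remaining entries are in the same relative order as
those of `σ`. -/
def consPerm {n : ℕ} (c : Fin (n + 1)) (σ : Perm (Fin n)) : Perm (Fin (n + 1)) :=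
  ((finSuccEquiv' 0).trans (optionCongr σ)).trans (finSuccEquiv' c).symm

@[simp] lemma consPerm_zero {n : ℕ} (c : Fin (n + 1)) (σ : Perm (Fin n)) :
    consPerm c σ 0 = c := by
  simp [consPerm]

@[simp] lemma consPerm_succ {n : ℕ} (c : Fin (n + 1)) (σ : Perm (Fin n)) (i : Fin n) :
    consPerm c σ i.succ = c.succAbove (σ i) := by
  have h : finSuccEquiv' (0 : Fin (n + 1)) i.succ = some i := by
    simp
  simp [consPerm, h]

lemma consPerm_bijective (n : ℕ) :
    Function.Bijective (fun x : Fin (n + 1) × Perm (Fin n) => consPerm x.1 x.2) := by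
  constructor
  · rintro ⟨c, σ⟩ ⟨d, τ⟩ h
    have hc : c = d := by
      have := congrArg (fun p => p 0) h
      simpa using this
    subst hc
    have hs : σ = τ := by
      ext1 i
      have := congrArg (fun p => p i.succ) h
      simpa using this
    rw [hs]
  · intro π
    have h : ∀ i : Fin n, ∃ y, (π 0).succAbove y = π i.succ := fun i =>
      Fin.exists_succAbove_eq (fun h => Fin.succ_ne_zero i (π.injective h))
    choose f hf using h
    have hinj : Function.Injective f := by
      intro i j hij
      have : π i.succ = π j.succ := by rw [← hf, ← hf, hij]
      simpa using this
    refine ⟨(π 0, Equiv.ofBijective f (Finite.injective_iff_bijective.1 hinj)), ?_⟩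
    ext1 i
    refine Fin.cases ?_ (fun j => ?_) i
    · simp
    · simp [hf]

lemma val_succAbove {n : ℕ} (c : Fin (n + 1)) (x : Fin n) :
    (c.succAbove x : ℕ) = if (x : ℕ) < c then (x : ℕ) else x + 1 := by
  unfold Fin.succAbove
  simp only [Fin.lt_def, Fin.val_castSucc]
  split_ifs <;> simp

/-- Prepending the smallest value creates no inversion and shifts the other values by one. -/
lemma isGood_consPerm_zero {n k : ℕ} (σ : Perm (Fin n)) :
    IsGood k (consPerm 0 σ) ↔ IsGood (k - 1) σ := by
  unfold IsGood
  simp only [Fin.forall_fin_succ, consPerm_zero, consPerm_succ, Fin.succAbove_zero,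
    Fin.succ_lt_succ_iff, Fin.val_succ]
  simp

/-- A first entry `c ≠ 0` is the larger value of an inversion, which forces `k ≤ c`, and it plays
the largest value of a `321` as soon as two smaller values are inverted further right. -/
lemma isGood_consPerm_succ {n k : ℕ} (c : Fin n) (σ : Perm (Fin n)) :
    IsGood k (consPerm c.succ σ) ↔ k ≤ (c : ℕ) + 1 ∧ IsGood ((c : ℕ) + 1) σ := by
  constructor
  · rintro ⟨h1, h2⟩
    refine ⟨?_, ?_, ?_⟩
    · by_contra hk
      have hn : 0 < n := c.pos
      have := h2 0 (σ.symm ⟨0, hn⟩).succ (Fin.succ_pos _)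
      simp only [consPerm_zero, consPerm_succ, Fin.lt_def, val_succAbove, Fin.val_succ,
        apply_symm_apply] at this
      refine this ⟨by simp, by omega⟩
    · intro i j l hij hjl h
      refine h1 i.succ j.succ l.succ (by simpa) (by simpa) ?_
      simpa [Fin.succAbove_lt_succAbove_iff] using h
    · intro i j hij h
      refine h1 0 i.succ j.succ (Fin.succ_pos _) (by simpa) ?_
      simp only [consPerm_zero, consPerm_succ, Fin.succAbove_lt_succAbove_iff]
      refine ⟨h.1, ?_⟩
      rw [Fin.lt_def, val_succAbove, Fin.val_succ, if_pos h.2]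
      exact h.2
  · rintro ⟨hk, h1, h2⟩
    refine ⟨?_, ?_⟩
    · intro i j l hij hjl
      obtain ⟨j, rfl⟩ := Fin.exists_succ_eq.2 (Fin.ne_zero_of_lt hij)
      obtain ⟨l, rfl⟩ := Fin.exists_succ_eq.2 (Fin.ne_zero_of_lt hjl)
      rw [Fin.succ_lt_succ_iff] at hjl
      revert hij
      refine Fin.cases ?_ (fun i => ?_) i
      · rintro - ⟨ha, hb⟩
        simp only [consPerm_zero, consPerm_succ, Fin.succAbove_lt_succAbove_iff] at ha hb
        refine h2 j l hjl ⟨ha, ?_⟩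
        rw [Fin.lt_def, val_succAbove, Fin.val_succ] at hb
        split_ifs at hb <;> omega
      · intro hij h
        rw [Fin.succ_lt_succ_iff] at hij
        simp only [consPerm_succ, Fin.succAbove_lt_succAbove_iff] at h
        exact h1 i j l hij hjl h
    · intro i j hij
      obtain ⟨j, rfl⟩ := Fin.exists_succ_eq.2 (Fin.ne_zero_of_lt hij)
      revert hij
      refine Fin.cases ?_ (fun i => ?_) i
      · rintro - ⟨_, hb⟩
        simp only [consPerm_zero, Fin.val_succ] at hb
        omega
      · rintro hij ⟨ha, hb⟩
        rw [Fin.succ_lt_succ_iff] at hij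
        simp only [consPerm_succ, Fin.succAbove_lt_succAbove_iff] at ha hb
        refine h2 i j hij ⟨ha, ?_⟩
        rw [val_succAbove, Fin.val_succ] at hb
        split_ifs at hb <;> omega

/-! ### The ballot recursion -/

lemma card_good_succ (n k : ℕ) :
    Nat.card {π : Perm (Fin (n + 1)) // IsGood k π} =
      Nat.card {σ : Perm (Fin n) // IsGood (k - 1) σ} +
        ∑ c ∈ Finset.range n,
          if k ≤ c + 1 then Nat.card {σ : Perm (Fin n) // IsGood (c + 1) σ} else 0 := by
  classical
  have e : (Σ c : Fin (n + 1), {σ : Perm (Fin n) // IsGood k (consPerm c σ)}) ≃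
      {π : Perm (Fin (n + 1)) // IsGood k π} :=
    (Equiv.subtypeProdEquivSigmaSubtype
      (fun (c : Fin (n + 1)) (σ : Perm (Fin n)) => IsGood k (consPerm c σ))).symm.trans
      ((Equiv.ofBijective _ (consPerm_bijective n)).subtypeEquiv (fun _ => Iff.rfl))
  rw [← Nat.card_congr e, Nat.card_sigma, Fin.sum_univ_succ, Finset.sum_range]
  simp only [isGood_consPerm_zero, isGood_consPerm_succ]
  congr 1
  refine Finset.sum_congr rfl fun c _ => ?_
  split_ifs with h <;> simp [h]

/-- The ballot number `binom (2n-k) n - binom (2n-k) (n+1)`, meaningful for `k ≤ n`. -/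
def ballot (n k : ℕ) : ℤ := ((2 * n - k).choose n : ℤ) - (2 * n - k).choose (n + 1)

lemma ballot_step {n k : ℕ} (h : k ≤ n) :
    ballot (n + 1) (k + 1) = ballot n k + ballot (n + 1) (k + 2) := by
  unfold ballot
  have e1 : 2 * (n + 1) - (k + 1) = (2 * n - k) + 1 := by omega
  have e2 : 2 * (n + 1) - (k + 2) = 2 * n - k := by omega
  rw [e1, e2, Nat.choose_succ_succ, Nat.choose_succ_succ]
  push_cast
  ring

lemma ballot_succ_zero (n : ℕ) : ballot (n + 1) 0 = ballot (n + 1) 1 := by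
  unfold ballot
  have e1 : 2 * (n + 1) - 0 = (2 * n + 1) + 1 := by omega
  have e2 : 2 * (n + 1) - 1 = 2 * n + 1 := by omega
  have e3 : (2 * n + 1).choose n = (2 * n + 1).choose (n + 1) :=
    Nat.choose_symm_half n |>.symm
  rw [e1, e2, Nat.choose_succ_succ' (2 * n + 1) n, Nat.choose_succ_succ' (2 * n + 1) (n + 1), e3]
  push_cast
  ring

lemma sum_ballot (n j : ℕ) (hj : j ≤ n) :
    (∑ c ∈ Finset.range n, if n - j + 1 ≤ c + 1 then ballot n (c + 1) else 0) =
      ballot (n + 1) (n - j + 2) := by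
  induction j with
  | zero =>
    rw [Finset.sum_eq_zero]
    · have e : 2 * (n + 1) - (n - 0 + 2) = n := by omega
      rw [ballot, e, Nat.choose_eq_zero_of_lt (by omega), Nat.choose_eq_zero_of_lt (by omega)]
      simp
    · intro c hc
      rw [Finset.mem_range] at hc
      rw [if_neg (by omega)]
  | succ j ih =>
    obtain ⟨d, hd⟩ : ∃ d, n = d + j + 1 := ⟨n - j - 1, by omega⟩
    have e1 : n - (j + 1) = d := by omega
    have e2 : n - j = d + 1 := by omega
    rw [e2] at ih
    rw [e1, ballot_step (k := d + 1) (by omega), ← ih (by omega)]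
    have hmem : d ∈ Finset.range n := by simp; omega
    rw [← Finset.add_sum_erase _ _ hmem, ← Finset.add_sum_erase (Finset.range n)
      (fun c => if d + 1 + 1 ≤ c + 1 then ballot n (c + 1) else 0) hmem]
    rw [if_pos le_rfl, if_neg (by omega), zero_add]
    congr 1
    refine Finset.sum_congr rfl fun c hc => ?_
    have := Finset.ne_of_mem_erase hc
    by_cases h : d + 1 ≤ c + 1
    · rw [if_pos h, if_pos (by omega)]
    · rw [if_neg h, if_neg (by omega)]

theorem card_good (n k : ℕ) (hk : k ≤ n) :
    (Nat.card {π : Perm (Fin n) // IsGood k π} : ℤ) = ballot n k := by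
  induction n generalizing k with
  | zero =>
    obtain rfl : k = 0 := by omega
    have : ∀ π : Perm (Fin 0), IsGood 0 π := fun π => ⟨fun i => i.elim0, fun i => i.elim0⟩
    simp [this, ballot]
  | succ n ih =>
    have key : ∀ d ≤ n, (Nat.card {π : Perm (Fin (n + 1)) // IsGood (d + 1) π} : ℤ) =
        ballot (n + 1) (d + 1) := by
      intro d hd
      rw [card_good_succ, ballot_step hd]
      push_cast
      rw [ih d hd]
      have hs := sum_ballot n (n - d) (by omega)
      rw [Nat.sub_sub_self hd] at hs
      simp only [add_le_add_iff_right] at hs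
      rw [← hs]
      congr 1
      refine Finset.sum_congr rfl fun c hc => ?_
      rw [Finset.mem_range] at hc
      rw [ih (c + 1) (by omega)]
    rcases k with _ | d
    · -- The value `0` alone is always sorted, so the conditions for `k = 0` and `k = 1` agree.
      rw [ballot_succ_zero, ← key 0 (by omega), card_good_succ, card_good_succ]
      simp
    · exact key d (by omega)

lemma ballot_zero (n : ℕ) : ballot n 0 = catalan n := by
  have h1 : (n + 1) * catalan n = (2 * n).choose n := by
    rw [succ_mul_catalan_eq_centralBinom, Nat.centralBinom]
  have h2 := Nat.choose_succ_right_eq (2 * n) n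
  have e : 2 * n - n = n := by omega
  rw [e] at h2
  have h3 : ((n : ℤ) + 1) * catalan n = (2 * n).choose n := by exact_mod_cast h1
  have h4 : ((2 * n).choose (n + 1) : ℤ) * (n + 1) = (2 * n).choose n * n := by exact_mod_cast h2
  have hpos : (n : ℤ) + 1 ≠ 0 := by positivity
  unfold ballot
  rw [Nat.sub_zero]
  apply mul_left_cancel₀ hpos
  linear_combination -h3 - h4

/-- The number of `321`-avoiding permutations is the Catalan number. -/
theorem card_avoiders (n : ℕ) :
    Nat.card {π : Perm (Fin n) // IsGood 0 π} = catalan n := by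
  have := card_good n 0 (Nat.zero_le n)
  rw [ballot_zero] at this
  exact_mod_cast this

/-! ### Reduction from `Y_n` to the square -/

lemma isTransversal_iff {m : ℕ} (π : Perm (Fin (m + 1))) :
    IsTransversal (bYn (m + 1)) π ↔ π (Fin.last m) ≠ 0 := by
  unfold IsTransversal bYn
  constructor
  · intro h h0
    have := h (Fin.last m)
    simp [h0] at this
  · intro h i
    split_ifs with hi
    · have h0 : π i = 0 := Fin.ext hi
      have hne : i ≠ Fin.last m := fun e => h (e ▸ h0)
      have := Fin.val_lt_last hne
      omega
    · omega

lemma transversal_avoids_iff {m : ℕ} (π : Perm (Fin (m + 1))) :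
    (IsTransversal (bYn (m + 1)) π ∧ ¬ ContainsIn (bYn (m + 1)) π p321) ↔
      IsGood 0 π ∧ π (Fin.last m) ≠ 0 := by
  rw [isTransversal_iff, and_comm]
  refine and_congr_left fun hlast => ?_
  constructor
  · intro h
    refine ⟨?_, by simp⟩
    rintro i j l hij hjl ⟨hlj, hji⟩
    apply h
    refine ⟨![i, j, l], ?_, ?_, ?_⟩
    · intro s t hst
      fin_cases s <;> fin_cases t <;> simp_all
      exact hij.trans hjl
    · intro s t
      have := hlj.trans hji
      fin_cases s <;> fin_cases t <;>
        simp_all [p321, le_of_lt]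
    · -- Only the cell in column `l` and row `π l` could be the missing corner.
      intro s t
      have hl : (l : ℕ) < m ∨ π l ≠ 0 := by
        by_cases e : l = Fin.last m
        · exact Or.inr (e ▸ hlast)
        · exact Or.inl (Fin.val_lt_last e)
      rw [Fin.lt_def] at hij hjl hlj hji
      have hl' : (l : ℕ) < m ∨ (π l : ℕ) ≠ 0 := hl.imp_right fun h e => h (Fin.ext e)
      have := l.isLt
      unfold bYn
      split_ifs with h0
      · fin_cases s <;> fin_cases t <;> simp at h0 ⊢ <;> simp [h0] at * <;> omega
      · omega
  · rintro ⟨h, -⟩ ⟨f, hf, hp, -⟩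
    refine h (f 0) (f 1) (f 2) (hf (by decide)) (hf (by decide)) ⟨?_, ?_⟩
    · exact (hp 2 1).1 (by decide)
    · exact (hp 1 0).1 (by decide)

/-- The only `321`-avoider ending in its smallest value is `2 3 … n 1`. -/
lemma unique_last_zero {m : ℕ} (π : Perm (Fin (m + 1))) :
    (IsGood 0 π ∧ π (Fin.last m) = 0) ↔ π = finRotate (m + 1) := by
  constructor
  · rintro ⟨⟨h, -⟩, h0⟩
    have hmono : StrictMono (fun i : Fin m => π i.castSucc) := by
      intro i j hij
      by_contra hlt
      have hne : π j.castSucc ≠ π i.castSucc := fun e => by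
        have := π.injective e
        simp at this
        exact hij.ne' this
      refine h i.castSucc j.castSucc (Fin.last m) (by simpa) (Fin.castSucc_lt_last j)
        ⟨?_, lt_of_le_of_ne (not_lt.1 hlt) hne⟩
      rw [h0, Fin.pos_iff_ne_zero, ← h0]
      exact fun e => (Fin.castSucc_lt_last j).ne (π.injective e)
    have hrange : Set.range (fun i : Fin m => π i.castSucc) =
        Set.range (Fin.succ : Fin m → Fin (m + 1)) := by
      rw [Fin.range_succ]
      ext y
      simp only [Set.mem_range, Set.mem_compl_iff, Set.mem_singleton_iff]
      constructor
      · rintro ⟨i, rfl⟩ e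
        exact (Fin.castSucc_lt_last i).ne (π.injective (e.trans h0.symm))
      · intro hy
        have hne : π.symm y ≠ Fin.last m := fun e => hy (by rw [← h0, ← e, apply_symm_apply])
        obtain ⟨i, hi⟩ := Fin.exists_castSucc_eq.2 hne
        exact ⟨i, by rw [hi, apply_symm_apply]⟩
    have := (hmono.range_inj Fin.strictMono_succ).1 hrange
    ext1 i
    refine Fin.lastCases ?_ (fun j => ?_) i
    · rw [h0, finRotate_last]
    · rw [congrFun this j, finRotate_apply, Fin.coeSucc_eq_succ]
  · rintro rfl
    refine ⟨⟨?_, by simp⟩, finRotate_last⟩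
    rintro i j l hij hjl ⟨-, hji⟩
    have hj : j < Fin.last m := lt_of_lt_of_le hjl (Fin.le_last l)
    have hi := hij.trans hj
    rw [Fin.lt_def, coe_finRotate_of_ne_last hi.ne, coe_finRotate_of_ne_last hj.ne] at hji
    rw [Fin.lt_def] at hij
    omega

theorem stmt16 (n : ℕ) (hn : 2 ≤ n) :
    SYcard (bYn n) p321 = catalan n - 1 := by
  obtain ⟨m, rfl⟩ : ∃ m, n = m + 1 := ⟨n - 1, by omega⟩
  classical
  unfold SYcard
  rw [← card_avoiders]
  simp only [transversal_avoids_iff, Nat.card_eq_fintype_card, Fintype.card_subtype]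
  have h1 : (Finset.univ.filter fun π : Perm (Fin (m + 1)) =>
      IsGood 0 π ∧ π (Fin.last m) ≠ 0) =
      (Finset.univ.filter fun π : Perm (Fin (m + 1)) => IsGood 0 π).erase
        (finRotate (m + 1)) := by
    ext π
    simp only [Finset.mem_filter, Finset.mem_univ, true_and, Finset.mem_erase, ne_eq,
      ← unique_last_zero]
    tauto
  rw [h1, Finset.card_erase_of_mem]
  simpa using ((unique_last_zero (finRotate (m + 1))).2 rfl).1
end

section
/- For every n ≥ 2, |S_{Y_n}(312)| = 2c_n − 3c_{n−1}. -/
/-!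
The proof removes two dots from a transversal of `Y_n` and counts by the Catalan generating tree.

Call `u ∈ {0,…,m}` a *cut* of `σ ∈ S_m` if `σ` preserves `{0,…,u-1}`, and let `k(σ)` be the number
of cuts. Write `A_m` for the set of 312-avoiders of length `m`.

* Appending a last entry `v` to `σ` (and raising the values `≥ v`) gives a 312-avoider exactly
  when `σ` avoids 312 and `v` is a cut of `σ` (`av_ins_last`). The cuts of the result are the cuts
  `u ≤ v` of `σ`, together with the new total length (`numCuts_ins_last`). Hence
  `∑_{A_{m+1}} g(k) = ∑_{A_m} ∑_{r=1}^{k} g(r+1)` (`sum_av_succ`).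
* In a transversal of `Y_n`, an occurrence of 312 fails to lie in `Y_n` exactly when it uses the
  lowest dot as its `1` and the last column as its `2`. Removing the lowest dot and then the dot in
  the last column therefore identifies the avoiders with triples of some `σ ∈ A_{n-2}` and two cuts
  of `σ` (`avY_ins`), so that their number is `∑_{A_{n-2}} k²`.
* Applying the recursion to `g = 1` once and twice gives `|A_{m+1}| = ∑_{A_m} k` and
  `|A_{m+2}| = ∑_{A_m} k(k+3)/2`, so `∑_{A_{n-2}} k² = 2|A_n| - 3|A_{n-1}|`.
* The recursion also yields `|A_m| = c_m`: if `C` is the Catalan series, then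
  `C^{k+1} - C^k = X C^{k+2}`, so the numbers `[X^j] C^k` obey the same recursion (`sum_coeff`).
-/

open Equiv

open Finset

/-! ### Inserting a dot -/

/-- The permutation obtained from `σ` by inserting a new dot in column `p` at height `v`. -/
def ins {n : ℕ} (p v : Fin (n + 1)) (σ : Perm (Fin n)) : Perm (Fin (n + 1)) :=
  ((finSuccEquiv' p).trans (optionCongr σ)).trans (finSuccEquiv' v).symm

lemma ins_self {n : ℕ} (p v : Fin (n + 1)) (σ : Perm (Fin n)) : ins p v σ p = v := by
  simp [ins]

lemma ins_succAbove {n : ℕ} (p v : Fin (n + 1)) (σ : Perm (Fin n)) (i : Fin n) :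
    ins p v σ (p.succAbove i) = v.succAbove (σ i) := by
  simp [ins]

lemma ins_perm_inj {n : ℕ} (p v : Fin (n + 1)) {σ τ : Perm (Fin n)}
    (h : ins p v σ = ins p v τ) : σ = τ := by
  ext i
  have := congrArg (fun e : Perm (Fin (n + 1)) => e (p.succAbove i)) h
  simp only [ins_succAbove] at this
  rw [Fin.succAbove_right_injective this]

/-- Every permutation arises uniquely by inserting a dot in a prescribed column `p`. -/
noncomputable def insCol {n : ℕ} (p : Fin (n + 1)) :
    Fin (n + 1) × Perm (Fin n) ≃ Perm (Fin (n + 1)) :=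
  Equiv.ofBijective (fun x => ins p x.1 x.2) <| by
    rw [Fintype.bijective_iff_injective_and_card]
    constructor
    · rintro ⟨v, σ⟩ ⟨w, τ⟩ h
      have hv : v = w := by
        simpa [ins_self] using congrArg (fun e : Perm (Fin (n + 1)) => e p) h
      subst hv
      exact congrArg (Prod.mk _) (ins_perm_inj p v h)
    · simp [Fintype.card_perm, Nat.factorial_succ]

/-- Every permutation arises uniquely by inserting a dot in a prescribed row `v`. -/
noncomputable def insRow {n : ℕ} (v : Fin (n + 1)) :
    Fin (n + 1) × Perm (Fin n) ≃ Perm (Fin (n + 1)) :=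
  Equiv.ofBijective (fun x => ins x.1 v x.2) <| by
    rw [Fintype.bijective_iff_injective_and_card]
    constructor
    · rintro ⟨p, σ⟩ ⟨q, τ⟩ h
      have hp : p = q := by
        have h' : ins p v σ = ins q v τ := h
        apply (ins p v σ).injective
        rw [ins_self, h', ins_self]
      subst hp
      exact congrArg (Prod.mk _) (ins_perm_inj p v h)
    · simp [Fintype.card_perm, Nat.factorial_succ]

/-! ### Avoidance and cuts -/

/-- `σ` avoids 312, spelled out on triples of columns. -/
def Av {n : ℕ} (σ : Perm (Fin n)) : Prop :=
  ∀ i j k : Fin n, i < j → j < k → σ j < σ k → σ k < σ i → False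

/-- `u` is a cut of `σ`: the first `u` columns occupy the lowest `u` rows. -/
def IsCut {n : ℕ} (σ : Perm (Fin n)) (u : ℕ) : Prop :=
  ∀ p : Fin n, (p : ℕ) < u → (σ p : ℕ) < u

lemma exists_down_of_up {n : ℕ} (σ : Perm (Fin n)) (u : ℕ)
    (h : ∃ p : Fin n, (p : ℕ) < u ∧ u ≤ (σ p : ℕ)) :
    ∃ q : Fin n, u ≤ (q : ℕ) ∧ (σ q : ℕ) < u := by
  by_contra! hc
  obtain ⟨p, hp, hp'⟩ := h
  -- Otherwise `σ⁻¹` injects the rows below `u` into the columns before `u`, with `p` missed.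
  let S : Finset (Fin n) := univ.filter (fun x : Fin n => (x : ℕ) < u)
  have hsub : S.image σ.symm ⊆ S.erase p := by
    intro x hx
    obtain ⟨y, hy, rfl⟩ := Finset.mem_image.1 hx
    have hy' : (y : ℕ) < u := by simpa [S] using hy
    simp only [S, Finset.mem_erase, Finset.mem_filter, Finset.mem_univ, true_and]
    refine ⟨fun e => ?_, ?_⟩
    · rw [← e] at hp'; simp at hp'; omega
    · by_contra hge
      have := hc (σ.symm y) (by omega)
      simp at this; omega
  have h1 := Finset.card_le_card hsub
  rw [Finset.card_image_of_injective _ σ.symm.injective] at h1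
  have h2 := Finset.card_erase_lt_of_mem (s := S) (a := p) (by simpa [S] using hp)
  omega

lemma exists_up_of_down {n : ℕ} (σ : Perm (Fin n)) (u : ℕ)
    (h : ∃ q : Fin n, u ≤ (q : ℕ) ∧ (σ q : ℕ) < u) :
    ∃ p : Fin n, (p : ℕ) < u ∧ u ≤ (σ p : ℕ) := by
  obtain ⟨q, hq, hq'⟩ := h
  obtain ⟨y, hy, hy'⟩ := exists_down_of_up σ.symm u ⟨σ q, hq', by simpa using hq⟩
  exact ⟨σ.symm y, hy', by simpa using hy⟩

lemma IsCut.le {n : ℕ} {σ : Perm (Fin n)} {u : ℕ} (h : IsCut σ u) (q : Fin n)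
    (hq : u ≤ (q : ℕ)) : u ≤ (σ q : ℕ) := by
  by_contra hlt
  obtain ⟨p, hp, hp'⟩ := exists_up_of_down σ u ⟨q, hq, by omega⟩
  have := h p hp
  omega

/-- Cuts are the heights not separated by any inversion. -/
lemma isCut_iff_values {n : ℕ} (σ : Perm (Fin n)) (u : ℕ) :
    IsCut σ u ↔ ∀ p q : Fin n, p < q → (σ q : ℕ) < u → u ≤ (σ p : ℕ) → False := by
  constructor
  · intro h p q hpq hq hp
    have h1 : ¬ (p : ℕ) < u := fun hlt => by have := h p hlt; omega
    have h2 : ¬ u ≤ (q : ℕ) := fun hle => by have := h.le q hle; omega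
    have : (p : ℕ) < q := hpq
    omega
  · intro h p hp
    by_contra hge
    obtain ⟨q, hq, hq'⟩ := exists_down_of_up σ u ⟨p, hp, by omega⟩
    exact h p q (Fin.lt_def.2 (by omega)) hq' (by omega)

/-- Cuts are the positions not separating any inversion. -/
lemma isCut_iff_positions {n : ℕ} (σ : Perm (Fin n)) (u : ℕ) :
    IsCut σ u ↔ ∀ p q : Fin n, (p : ℕ) < u → u ≤ (q : ℕ) → σ q < σ p → False := by
  constructor
  · intro h p q hp hq hlt
    have h1 := h p hp
    have h2 := h.le q hq
    have : (σ q : ℕ) < σ p := hlt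
    omega
  · intro h p hp
    by_contra hge
    obtain ⟨q, hq, hq'⟩ := exists_down_of_up σ u ⟨p, hp, by omega⟩
    exact h p q hp hq (Fin.lt_def.2 (by omega))

open Classical in
/-- The set of cuts of a permutation of length `n`, a subset of `{0,…,n}`. -/
noncomputable def cuts {n : ℕ} (σ : Perm (Fin n)) : Finset (Fin (n + 1)) :=
  univ.filter (fun u => IsCut σ (u : ℕ))

lemma mem_cuts {n : ℕ} (σ : Perm (Fin n)) (u : Fin (n + 1)) : u ∈ cuts σ ↔ IsCut σ (u : ℕ) := by
  simp [cuts]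

/-! ### Appending a last entry -/

lemma ins_last_castSucc {n : ℕ} (v : Fin (n + 1)) (σ : Perm (Fin n)) (i : Fin n) :
    ins (Fin.last n) v σ i.castSucc = v.succAbove (σ i) := by
  rw [← Fin.succAbove_last_apply, ins_succAbove]

lemma succAbove_val {n : ℕ} (v : Fin (n + 1)) (x : Fin n) :
    (v.succAbove x : ℕ) = if (x : ℕ) < v then (x : ℕ) else x + 1 := by
  simp only [Fin.succAbove, Fin.lt_def, Fin.val_castSucc]
  split_ifs <;> simp

lemma av_ins_last {n : ℕ} (v : Fin (n + 1)) (σ : Perm (Fin n)) :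
    Av (ins (Fin.last n) v σ) ↔ Av σ ∧ v ∈ cuts σ := by
  rw [mem_cuts, isCut_iff_values]
  constructor
  · intro h
    refine ⟨fun i j k hij hjk h1 h2 => ?_, fun p q hpq h1 h2 => ?_⟩
    · refine h i.castSucc j.castSucc k.castSucc hij hjk ?_ ?_ <;>
        simpa [ins_last_castSucc] using by assumption
    · refine h p.castSucc q.castSucc (Fin.last n) hpq (Fin.castSucc_lt_last q) ?_ ?_
      · rw [ins_last_castSucc, ins_self, Fin.lt_def, succAbove_val]; split_ifs; omega
      · rw [ins_last_castSucc, ins_self, Fin.lt_def, succAbove_val]; split_ifs <;> omega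
  · rintro ⟨hσ, hv⟩ i j k hij hjk h1 h2
    induction k using Fin.lastCases with
    | last =>
      obtain ⟨j, rfl⟩ := Fin.exists_castSucc_eq.2 hjk.ne
      obtain ⟨i, rfl⟩ := Fin.exists_castSucc_eq.2 (hij.trans hjk).ne
      rw [ins_last_castSucc, ins_self, Fin.lt_def, succAbove_val] at h1 h2
      refine hv i j hij ?_ ?_ <;> grind
    | cast k =>
      obtain ⟨j, rfl⟩ := Fin.exists_castSucc_eq.2 (hjk.trans (Fin.castSucc_lt_last k)).ne
      obtain ⟨i, rfl⟩ :=
        Fin.exists_castSucc_eq.2 ((hij.trans hjk).trans (Fin.castSucc_lt_last k)).ne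
      simp only [ins_last_castSucc, Fin.succAbove_lt_succAbove_iff] at h1 h2
      exact hσ i j k hij hjk h1 h2

lemma isCut_last {n : ℕ} (σ : Perm (Fin n)) : IsCut σ n := fun p _ => (σ p).2

lemma isCut_ins_last {n : ℕ} (v u : Fin (n + 1)) (σ : Perm (Fin n)) :
    IsCut (ins (Fin.last n) v σ) (u : ℕ) ↔ IsCut σ (u : ℕ) ∧ u ≤ v := by
  constructor
  · intro h
    have huv : (u : ℕ) ≤ v := by
      simpa [ins_self] using h.le (Fin.last n) (by have := u.2; simp; omega)
    refine ⟨fun p hp => ?_, huv⟩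
    have := h p.castSucc (by simpa using hp)
    rw [ins_last_castSucc, succAbove_val] at this
    split_ifs at this <;> omega
  · rintro ⟨h, huv⟩ p hp
    have huv' : (u : ℕ) ≤ v := huv
    induction p using Fin.lastCases with
    | last => have := u.2; simp at hp; omega
    | cast p =>
      have := h p (by simpa using hp)
      rw [ins_last_castSucc, succAbove_val]
      split_ifs <;> omega

lemma numCuts_ins_last {n : ℕ} (v : Fin (n + 1)) (σ : Perm (Fin n)) :
    (cuts (ins (Fin.last n) v σ)).card = ((cuts σ).filter (· ≤ v)).card + 1 := by
  have : cuts (ins (Fin.last n) v σ) =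
      insert (Fin.last (n + 1)) (((cuts σ).filter (· ≤ v)).map Fin.castSuccEmb) := by
    ext w
    induction w using Fin.lastCases with
    | last => simpa [mem_cuts] using isCut_last (ins (Fin.last n) v σ)
    | cast w =>
      simp only [mem_cuts, Fin.val_castSucc, isCut_ins_last, Finset.mem_insert, Finset.mem_map,
        Finset.mem_filter, Fin.coe_castSuccEmb, Fin.castSucc_inj]
      constructor
      · exact fun h => Or.inr ⟨w, h, rfl⟩
      · rintro (h | ⟨a, h, rfl⟩)
        · exact absurd h (Fin.castSucc_lt_last w).ne
        · exact h
  rw [this, Finset.card_insert_of_notMem, Finset.card_map]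
  simp only [Finset.mem_map, not_exists, not_and]
  exact fun x _ h => (Fin.castSucc_lt_last x).ne h

/-! ### The generating tree -/

lemma sum_rank {α : Type*} [LinearOrder α] (g : ℕ → ℕ) (S : Finset α) :
    ∑ v ∈ S, g (S.filter (· ≤ v)).card = ∑ r ∈ range S.card, g (r + 1) := by
  induction S using Finset.induction_on_max with
  | empty => simp
  | insert a s ha ih =>
    have hn : a ∉ s := fun h => lt_irrefl _ (ha a h)
    rw [Finset.sum_insert hn, Finset.card_insert_of_notMem hn, Finset.sum_range_succ, ← ih,
      add_comm]
    congr 1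
    · refine Finset.sum_congr rfl fun v hv => ?_
      rw [Finset.filter_insert, if_neg (not_le.2 (ha v hv))]
    · rw [Finset.filter_true_of_mem, Finset.card_insert_of_notMem hn]
      intro x hx
      rcases Finset.mem_insert.1 hx with rfl | hx
      · exact le_rfl
      · exact (ha x hx).le

open Classical in
/-- The sum of `g (k σ)` over the 312-avoiders `σ` of length `m`, where `k σ` counts cuts. -/
noncomputable def avSum (m : ℕ) (g : ℕ → ℕ) : ℕ :=
  ∑ σ : Perm (Fin m), if Av σ then g (cuts σ).card else 0

/-- An avoider with `k` cuts has children with `2, 3, …, k + 1` cuts. -/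
lemma sum_av_succ (m : ℕ) (g : ℕ → ℕ) :
    avSum (m + 1) g = avSum m (fun k => ∑ r ∈ range k, g (r + 2)) := by
  classical
  unfold avSum
  rw [← Equiv.sum_comp (insCol (Fin.last m)), Fintype.sum_prod_type_right]
  refine Finset.sum_congr rfl fun σ _ => ?_
  have hr := sum_rank (fun r => g (r + 1)) (cuts σ)
  simp only [add_assoc, Nat.reduceAdd] at hr
  beta_reduce
  rw [← hr]
  simp only [insCol, Equiv.ofBijective_apply, av_ins_last, numCuts_ins_last]
  by_cases h : Av σ
  · simp [h, Finset.sum_ite_mem]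
  · simp [h]

lemma avSum_zero (g : ℕ → ℕ) : avSum 0 g = g 1 := by
  classical
  have h1 : Av (1 : Perm (Fin 0)) := fun i => i.elim0
  have h2 : cuts (1 : Perm (Fin 0)) = univ := by
    ext u; simp only [mem_cuts, Finset.mem_univ, iff_true]; exact fun p => p.elim0
  unfold avSum
  rw [Fintype.sum_unique]
  have : (default : Perm (Fin 0)) = 1 := Subsingleton.elim _ _
  rw [this, if_pos h1, h2]
  simp

open PowerSeries in
/-- The coefficients of the powers of the Catalan series obey the generating-tree recursion. -/
lemma sum_coeff (j k : ℕ) :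
    ∑ r ∈ range k, coeff j (catalanSeries ^ (r + 2)) = coeff (j + 1) (catalanSeries ^ k) := by
  induction k with
  | zero => simp [coeff_one]
  | succ k ih =>
    have h : catalanSeries ^ (k + 1) = catalanSeries ^ k + X * catalanSeries ^ (k + 2) := by
      have := catalanSeries_sq_mul_X_add_one
      calc catalanSeries ^ (k + 1) = catalanSeries ^ k * catalanSeries := pow_succ _ _
        _ = catalanSeries ^ k * (catalanSeries ^ 2 * X + 1) := by rw [this]
        _ = _ := by ring
    rw [Finset.sum_range_succ, ih, h, map_add, coeff_succ_X_mul]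

lemma avSum_coeff (m : ℕ) : ∀ j,
    avSum m (fun k => PowerSeries.coeff j (PowerSeries.catalanSeries ^ k)) = catalan (m + j) := by
  induction m with
  | zero => intro j; simp [avSum_zero]
  | succ m ih =>
    intro j
    rw [sum_av_succ]
    simp only [sum_coeff]
    rw [ih (j + 1)]
    congr 1
    ring

lemma coeff_one_pow (k : ℕ) :
    PowerSeries.coeff 1 (PowerSeries.catalanSeries ^ k) = k := by
  rw [← sum_coeff 0 k]
  simp

lemma coeff_two_pow (k : ℕ) :
    2 * PowerSeries.coeff 2 (PowerSeries.catalanSeries ^ k) = k * (k + 3) := by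
  rw [← sum_coeff 1 k]
  simp only [coeff_one_pow]
  induction k with
  | zero => simp
  | succ k ih => rw [Finset.sum_range_succ, mul_add, ih]; ring

lemma avSum_sq (m : ℕ) :
    avSum m (fun k => k * k) + 3 * catalan (m + 1) = 2 * catalan (m + 2) := by
  rw [← avSum_coeff m 1, ← avSum_coeff m 2]
  unfold avSum
  rw [Finset.mul_sum, Finset.mul_sum, ← Finset.sum_add_distrib]
  refine Finset.sum_congr rfl fun σ _ => ?_
  split_ifs
  · beta_reduce
    rw [coeff_two_pow, coeff_one_pow]; ring
  · rfl

/-! ### Transversals of the square without its corner -/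

/-- `π` is a transversal of `Y_n` avoiding 312 in `Y_n`, where `n = m + 2`: the lowest dot is not
in the last column, and every occurrence of 312 has the lowest dot as its `1` and the last column
as its `2`. -/
def AvY {m : ℕ} (π : Perm (Fin (m + 2))) : Prop :=
  π (Fin.last (m + 1)) ≠ 0 ∧ ∀ i j k : Fin (m + 2), i < j → j < k → π j < π k → π k < π i →
    π j = 0 ∧ k = Fin.last (m + 1)

lemma avY_iff {m : ℕ} (π : Perm (Fin (m + 2))) :
    (IsTransversal (bYn (m + 2)) π ∧ ¬ ContainsIn (bYn (m + 2)) π p312) ↔ AvY π := by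
  have hb : ∀ x y : Fin (m + 2), (x : ℕ) + 1 ≤ bYn (m + 2) y ↔ ¬ (y = 0 ∧ x = Fin.last (m + 1)) := by
    intro x y
    have := x.2
    simp only [bYn, Fin.ext_iff, Fin.val_zero, Fin.val_last]
    split_ifs <;> omega
  unfold IsTransversal ContainsIn AvY
  simp only [hb]
  refine and_congr ⟨fun h h0 => h _ ⟨h0, rfl⟩, fun h i ⟨h0, hi⟩ => h (hi ▸ h0)⟩ ?_
  constructor
  · intro h i j k hij hjk h1 h2
    by_contra hc
    refine h ⟨![i, j, k], ?_, ?_, ?_⟩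
    · intro a b hab
      fin_cases a <;> fin_cases b <;> simp_all
      exact hij.trans hjk
    · intro a b
      have h3 := h1.trans h2
      fin_cases a <;> fin_cases b <;>
        simp [p312, h1, h2, h3, h1.le, h2.le, h3.le]
    · rintro a b ⟨h0, hl⟩
      -- A cell outside `Y` in this submatrix forces the lowest dot into column `j` and `k` to be last.
      apply hc
      have hk := Fin.le_last k
      have hj0 := Fin.zero_le (π j)
      fin_cases a <;> fin_cases b <;> simp at h0 hl <;> grind
  · rintro h ⟨f, hf, hp, hY⟩
    have h1 := (hp 1 2).1 (by decide)
    have h2 := (hp 2 0).1 (by decide)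
    exact hY 2 1 (h _ _ _ (hf (by decide : (0 : Fin 3) < 1)) (hf (by decide : (1 : Fin 3) < 2)) h1 h2)

/-- Removing the lowest dot (in column `j`) and then the dot in the last column (at height `v`)
turns an avoider in `Y` into a 312-avoider for which both `j` and `v` are cuts. -/
lemma avY_ins {m : ℕ} (j : Fin (m + 1)) (v : Fin (m + 1)) (σ : Perm (Fin m)) :
    AvY (ins j.castSucc 0 (ins (Fin.last m) v σ)) ↔ Av σ ∧ v ∈ cuts σ ∧ j ∈ cuts σ := by
  rw [← and_assoc, ← av_ins_last, mem_cuts, isCut_iff_positions]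
  set ρ := ins (Fin.last m) v σ with hρ
  have hpos : ∀ x : Fin (m + 1), ins j.castSucc 0 ρ (j.castSucc.succAbove x) = (ρ x).succ := by
    intro x; rw [ins_succAbove, Fin.zero_succAbove]
  have hlast : j.castSucc.succAbove (Fin.last m) = Fin.last (m + 1) := by
    have := j.2
    ext; rw [succAbove_val]; simp; omega
  constructor
  · rintro ⟨-, h⟩
    refine ⟨fun a b c hab hbc h1 h2 => ?_, fun p q hp hq hlt => ?_⟩
    · have := (h (j.castSucc.succAbove a) (j.castSucc.succAbove b) (j.castSucc.succAbove c)
        (by simpa using hab) (by simpa using hbc) (by simpa [hpos] using h1)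
        (by simpa [hpos] using h2)).1
      rw [hpos] at this
      exact Fin.succ_ne_zero _ this
    · have := (h (j.castSucc.succAbove p.castSucc) j.castSucc (j.castSucc.succAbove q.castSucc)
        (by rw [Fin.lt_def, succAbove_val]; simp [hp])
        (by rw [Fin.lt_def, succAbove_val]; simp; split_ifs <;> omega)
        (by rw [ins_self, hpos]; exact Fin.succ_pos _)
        (by rw [hpos, hpos, Fin.succ_lt_succ_iff, hρ, ins_last_castSucc, ins_last_castSucc]
            simpa using hlt)).2
      rw [← hlast] at this
      exact (Fin.castSucc_lt_last q).ne (Fin.succAbove_right_injective this)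
  · rintro ⟨hρA, hcut⟩
    refine ⟨?_, fun a b c hab hbc h1 h2 => ?_⟩
    · rw [← hlast, hpos]; exact Fin.succ_ne_zero _
    · have ha : a ≠ j.castSucc := by
        rintro rfl; rw [ins_self] at h2; exact absurd h2 (Fin.not_lt_zero _)
      have hc : c ≠ j.castSucc := by
        rintro rfl; rw [ins_self] at h1; exact absurd h1 (Fin.not_lt_zero _)
      obtain ⟨a, rfl⟩ := Fin.exists_succAbove_eq ha
      obtain ⟨c, rfl⟩ := Fin.exists_succAbove_eq hc
      rw [hpos, hpos, Fin.succ_lt_succ_iff] at h2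
      by_cases hb : b = j.castSucc
      · subst hb
        refine ⟨ins_self _ _ _, ?_⟩
        rw [← hlast]
        by_contra hne
        have hcl : c ≠ Fin.last m := fun e => hne (by rw [e])
        rw [Fin.lt_def, succAbove_val] at hab hbc
        have hcv : (j : ℕ) ≤ c := by
          simp only [Fin.val_castSucc] at hbc; split_ifs at hbc <;> omega
        have hav : (a : ℕ) < j := by
          simp only [Fin.val_castSucc] at hab; split_ifs at hab <;> omega
        obtain ⟨c, rfl⟩ := Fin.exists_castSucc_eq.2 hcl
        have hal : a ≠ Fin.last m := by
          rintro rfl; have := j.2; simp at hav; omega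
        obtain ⟨a, rfl⟩ := Fin.exists_castSucc_eq.2 hal
        rw [hρ, ins_last_castSucc, ins_last_castSucc, Fin.succAbove_lt_succAbove_iff] at h2
        exact hcut a c hav hcv h2
      · obtain ⟨b, rfl⟩ := Fin.exists_succAbove_eq hb
        rw [hpos, hpos, Fin.succ_lt_succ_iff] at h1
        exact (hρA a b c (by simpa using hab) (by simpa using hbc) h1 h2).elim

lemma not_avY_ins_last {m : ℕ} (ρ : Perm (Fin (m + 1))) :
    ¬ AvY (ins (Fin.last (m + 1)) 0 ρ) := fun h => h.1 (ins_self _ _ _)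

lemma card_avY (m : ℕ) : Nat.card {π : Perm (Fin (m + 2)) // AvY π} = avSum m (fun k => k * k) := by
  classical
  rw [Nat.card_eq_fintype_card, Fintype.card_subtype, Finset.card_filter,
    ← Equiv.sum_comp (insRow 0), Fintype.sum_prod_type, Fin.sum_univ_castSucc]
  simp only [insRow, Equiv.ofBijective_apply, not_avY_ins_last, if_false, Finset.sum_const_zero,
    add_zero]
  rw [Finset.sum_comm, ← Equiv.sum_comp (insCol (Fin.last m)), Fintype.sum_prod_type_right]
  simp only [insCol, Equiv.ofBijective_apply, avY_ins]
  unfold avSum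
  refine Finset.sum_congr rfl fun σ _ => ?_
  by_cases h : Av σ
  · simp [h, ite_and, Finset.sum_ite_mem]
  · simp [h]

theorem stmt17 (n : ℕ) (hn : 2 ≤ n) :
    SYcard (bYn n) p312 = 2 * catalan n - 3 * catalan (n - 1) := by
  obtain ⟨m, rfl⟩ := Nat.exists_eq_add_of_le' hn
  unfold SYcard
  simp only [avY_iff]
  rw [card_avY]
  have := avSum_sq m
  rw [show m + 2 - 1 = m + 1 from rfl]
  omega
end
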